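/- Let A : ℝ → ℂ and f : ℝ → ℂ be smooth (infinitely differentiable) and fix x ∈ ℝ. Define the flux-form stencil L_x f(x; h) = (1/h²)·[ −(9/8)·A(x − h/2)·((1/24)f(x−2h) − (9/8)f(x−h) + (9/8)f(x) − (1/24)f(x+h)) + (1/24)·A(x − 3h/2)·(−(11/12)f(x−2h) + (17/24)f(x−h) + (3/8)f(x) − (5/24)f(x+h) + (1/24)f(x+2h)) − (1/24)·A(x + 3h/2)·(−(1/24)f(x−2h) + (5/24)f(x−h) − (3/8)f(x) − (17/24)f(x+h) + (11/12)f(x+2h)) + (9/8)·A(x + h/2)·((1/24)f(x−h) − (9/8)f(x) + (9/8)f(x+h) − (1/24)f(x+2h)) ]. Then L_x f(x; h) = (d/dx)(A·f′)(x) + O(h⁴) as h → 0⁺. -/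

import Mathlib

noncomputable section

/-- The flux-form fourth-order stencil `L_x f(x; h)` with coefficient `A`. -/
def Lx (A f : ℝ → ℂ) (x h : ℝ) : ℂ :=
  (1 / (h : ℂ) ^ 2) *
    ( -(9 / 8) * A (x - h / 2) *
        ((1 / 24) * f (x - 2 * h) - (9 / 8) * f (x - h) + (9 / 8) * f x
          - (1 / 24) * f (x + h))
      + (1 / 24) * A (x - 3 * h / 2) *
        (-(11 / 12) * f (x - 2 * h) + (17 / 24) * f (x - h) + (3 / 8) * f x
          - (5 / 24) * f (x + h) + (1 / 24) * f (x + 2 * h))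
      - (1 / 24) * A (x + 3 * h / 2) *
        (-(1 / 24) * f (x - 2 * h) + (5 / 24) * f (x - h) - (3 / 8) * f x
          - (17 / 24) * f (x + h) + (11 / 12) * f (x + 2 * h))
      + (9 / 8) * A (x + h / 2) *
        ((1 / 24) * f (x - h) - (9 / 8) * f x + (9 / 8) * f (x + h)
          - (1 / 24) * f (x + 2 * h)) )

open Asymptotics Filter Topology

lemma aux_taylor (f : ℝ → ℂ) (hf : ContDiff ℝ (⊤ : ℕ∞) f) (x : ℝ) :
    ∃ b3 b4 b5 : ℂ, ∀ c : ℝ, (fun h : ℝ => f (x + c * h) - (f x + deriv f x * ((c:ℂ) * h) +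
      (deriv (deriv f) x / 2) * ((c:ℂ) * h)^2 + b3 * ((c:ℂ) * h)^3 + b4 * ((c:ℂ) * h)^4
        + b5 * ((c:ℂ) * h)^5)) =O[𝓝 0] fun h : ℝ => h ^ 6 := by
  have h6 : ContDiff ℝ (6:ℕ) f := contDiff_infty.1 hf _
  have key := (taylor_isLittleO_univ (x₀ := x) h6).isBigO
  refine ⟨iteratedDeriv 3 f x / 6, iteratedDeriv 4 f x / 24, iteratedDeriv 5 f x / 120,
    fun c => ?_⟩
  have ht : Tendsto (fun h : ℝ => x + c * h) (𝓝 0) (𝓝 x) := by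
    have : Continuous (fun h : ℝ => x + c * h) := by fun_prop
    simpa using this.tendsto 0
  have k2 := key.comp_tendsto ht
  have h3 : (fun h : ℝ => (c * h) ^ 6) =O[𝓝 0] fun h : ℝ => h ^ 6 := by
    simp_rw [mul_pow]
    exact (isBigO_refl _ _).const_mul_left _
  have k3 : (fun h : ℝ => f (x + c * h) - taylorWithinEval f 6 Set.univ x (x + c * h))
      =O[𝓝 0] fun h : ℝ => h ^ 6 := by
    refine IsBigO.trans ?_ h3
    simpa [Function.comp_def] using k2
  have k4 : (fun h : ℝ => ((c * h) ^ 6 : ℝ) • (iteratedDeriv 6 f x / 720)) =O[𝓝 0]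
      fun h : ℝ => h ^ 6 := by
    refine IsBigO.trans ?_ h3
    have := (isBigO_refl (fun h : ℝ => (c * h) ^ 6) (𝓝 0)).smul
          (isBigO_const_const (iteratedDeriv 6 f x / 720) (one_ne_zero (α := ℝ)) (𝓝 0))
    simpa only [smul_eq_mul, mul_one] using this
  refine (k3.add k4).congr_left fun h => ?_
  rw [taylor_within_apply]
  simp only [Finset.sum_range_succ, Finset.sum_range_zero, iteratedDerivWithin_univ,
    Complex.real_smul, iteratedDeriv_zero, iteratedDeriv_one, Nat.factorial]
  have e2 : iteratedDeriv 2 f x = deriv (deriv f) x := by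
    rw [iteratedDeriv_succ, iteratedDeriv_one]
  rw [e2]
  push_cast
  ring

lemma aux_prod {u v p q : ℝ → ℂ} (hu : (fun h => u h - p h) =O[𝓝 0] fun h : ℝ => h ^ 6)
    (hv : (fun h => v h - q h) =O[𝓝 0] fun h : ℝ => h ^ 6) (hp : Continuous p)
    (hvc : Continuous v) :
    (fun h => u h * v h - p h * q h) =O[𝓝 0] fun h : ℝ => h ^ 6 := by
  have o1 : v =O[𝓝 0] fun _ : ℝ => (1:ℝ) := hvc.continuousAt.tendsto.isBigO_one ℝ
  have o2 : p =O[𝓝 0] fun _ : ℝ => (1:ℝ) := hp.continuousAt.tendsto.isBigO_one ℝ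
  have t1 := hu.mul o1
  have t2 := o2.mul hv
  simp only [mul_one, one_mul] at t1 t2
  exact (t1.add t2).congr_left fun h => by ring

def auxQ (a1 a2 a3 a4 a5 b1 b2 b3 b4 b5 h : ℂ) : ℂ :=
  (-4) * a1 * b5 * h^0 + (-9/4) * a2 * b4 * h^0 + (-27/16) * a3 * b3 * h^0 +
    (-135/16) * a3 * b5 * h^2 + (-9/8) * a4 * (b2 / 2) * h^0 + (-45/8) * a4 * b4 * h^2 + (-9/16) * a5 * b1 * h^0 +
    (-135/32) * a5 * b3 * h^2 + (-603/32) * a5 * b5 * h^4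

lemma aux_alg (h a0 a1 a2 a3 a4 a5 b0 b1 b2 b3 b4 b5 : ℂ) (p q : ℂ → ℂ)
    (hp : ∀ c, p c = a0 + a1 * (c * h) + a2 * (c * h)^2 + a3 * (c * h)^3 + a4 * (c * h)^4
      + a5 * (c * h)^5)
    (hq : ∀ c, q c = b0 + b1 * (c * h) + b2 / 2 * (c * h)^2 + b3 * (c * h)^3 + b4 * (c * h)^4
      + b5 * (c * h)^5) :
    -(9 / 8) * (p (-1/2) * ((1 / 24) * q (-2) - (9 / 8) * q (-1) + (9 / 8) * q 0 - (1 / 24) * q 1))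
      + (1 / 24) * (p (-3/2) *
        (-(11 / 12) * q (-2) + (17 / 24) * q (-1) + (3 / 8) * q 0
          - (5 / 24) * q 1 + (1 / 24) * q 2))
      - (1 / 24) * (p (3/2) *
        (-(1 / 24) * q (-2) + (5 / 24) * q (-1) - (3 / 8) * q 0
          - (17 / 24) * q 1 + (11 / 12) * q 2))
      + (9 / 8) * (p (1/2) *
        ((1 / 24) * q (-1) - (9 / 8) * q 0 + (9 / 8) * q 1 - (1 / 24) * q 2))
    = h^2 * (a1 * b1 + a0 * b2) + h^6 * auxQ a1 a2 a3 a4 a5 b1 b2 b3 b4 b5 h := by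
  simp only [hp, hq, auxQ]
  ring

/-- the flux-form stencil approximates (A f')' with fourth-order accuracy. -/
theorem flux_stencil_fourth_order
    (A f : ℝ → ℂ) (hA : ContDiff ℝ (⊤ : ℕ∞) A) (hf : ContDiff ℝ (⊤ : ℕ∞) f) (x : ℝ) :
    ∃ C δ : ℝ, 0 < C ∧ 0 < δ ∧ ∀ h : ℝ, 0 < h → h < δ →
      ‖Lx A f x h - deriv (fun t => A t * deriv f t) x‖ ≤ C * h ^ 4 := by
  obtain ⟨a3, a4, a5, ha⟩ := aux_taylor A hA x
  obtain ⟨b3, b4, b5, hb⟩ := aux_taylor f hf x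
  have cA := hA.continuous
  have cf := hf.continuous
  have hd : deriv (fun t => A t * deriv f t) x = deriv A x * deriv f x + A x * deriv (deriv f) x := by
    have d1 : DifferentiableAt ℝ A x := (hA.differentiable (by simp)).differentiableAt
    have d2 : DifferentiableAt ℝ (deriv f) x := by
      have h2 : ContDiff ℝ (1 + 1) f := by exact_mod_cast contDiff_infty.1 hf 2
      exact ((contDiff_succ_iff_deriv.1 h2).2.2.differentiable (by simp)).differentiableAt
    exact deriv_fun_mul d1 d2
  rw [hd]
  generalize deriv A x = a1 at *
  generalize deriv (deriv A) x / 2 = a2 at *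
  generalize deriv f x = b1 at *
  generalize deriv (deriv f) x = b2 at *
  set p : ℝ → ℂ → ℂ := fun h c => A x + a1 * (c * h) + a2 * (c * h)^2 + a3 * (c * h)^3
    + a4 * (c * h)^4 + a5 * (c * h)^5 with hp
  set q : ℝ → ℂ → ℂ := fun h c => f x + b1 * (c * h) + b2 / 2 * (c * h)^2 + b3 * (c * h)^3
    + b4 * (c * h)^4 + b5 * (c * h)^5 with hq
  have pc : ∀ c, Continuous fun h => p h c := fun c => by simp only [hp]; fun_prop
  have A1 : (fun h : ℝ => A (x - h / 2) - p h (-1/2)) =O[𝓝 0] fun h : ℝ => h ^ 6 :=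
    (ha (-1/2)).congr_left fun h => by
      simp only [hp]; rw [show x + -1/2 * h = x - h/2 by ring]; push_cast; rfl
  have A2 : (fun h : ℝ => A (x - 3 * h / 2) - p h (-3/2)) =O[𝓝 0] fun h : ℝ => h ^ 6 :=
    (ha (-3/2)).congr_left fun h => by
      simp only [hp]; rw [show x + -3/2 * h = x - 3*h/2 by ring]; push_cast; rfl
  have A3 : (fun h : ℝ => A (x + 3 * h / 2) - p h (3/2)) =O[𝓝 0] fun h : ℝ => h ^ 6 :=
    (ha (3/2)).congr_left fun h => by
      simp only [hp]; rw [show x + 3/2 * h = x + 3*h/2 by ring]; push_cast; rfl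
  have A4 : (fun h : ℝ => A (x + h / 2) - p h (1/2)) =O[𝓝 0] fun h : ℝ => h ^ 6 :=
    (ha (1/2)).congr_left fun h => by
      simp only [hp]; rw [show x + 1/2 * h = x + h/2 by ring]; push_cast; rfl
  have F1 : (fun h : ℝ => f (x - 2 * h) - q h (-2)) =O[𝓝 0] fun h : ℝ => h ^ 6 :=
    (hb (-2)).congr_left fun h => by
      simp only [hq]; rw [show x + -2 * h = x - 2 * h by ring]; push_cast; rfl
  have F2 : (fun h : ℝ => f (x - h) - q h (-1)) =O[𝓝 0] fun h : ℝ => h ^ 6 :=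
    (hb (-1)).congr_left fun h => by
      simp only [hq]; rw [show x + -1 * h = x - h by ring]; push_cast; rfl
  have F3 : (fun h : ℝ => f x - q h 0) =O[𝓝 0] fun h : ℝ => h ^ 6 :=
    (hb 0).congr_left fun h => by
      simp only [hq]; rw [show x + 0 * h = x by ring]; push_cast; rfl
  have F4 : (fun h : ℝ => f (x + h) - q h 1) =O[𝓝 0] fun h : ℝ => h ^ 6 :=
    (hb 1).congr_left fun h => by
      simp only [hq]; rw [show x + 1 * h = x + h by ring]; push_cast; rfl
  have F5 : (fun h : ℝ => f (x + 2 * h) - q h 2) =O[𝓝 0] fun h : ℝ => h ^ 6 :=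
    (hb 2).congr_left fun h => by
      simp only [hq]; push_cast; rfl
  have lin : ∀ c1 c2 c3 c4 c5 : ℂ, (fun h : ℝ => (c1 * f (x - 2 * h) + c2 * f (x - h) + c3 * f x
      + c4 * f (x + h) + c5 * f (x + 2 * h)) - (c1 * q h (-2) + c2 * q h (-1) + c3 * q h 0
      + c4 * q h 1 + c5 * q h 2)) =O[𝓝 0] fun h : ℝ => h ^ 6 := fun c1 c2 c3 c4 c5 =>
    (((((F1.const_mul_left c1).add (F2.const_mul_left c2)).add (F3.const_mul_left c3)).add
      (F4.const_mul_left c4)).add (F5.const_mul_left c5)).congr_left fun h => by ring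
  have P1 := aux_prod A1 (lin (1/24) (-(9/8)) (9/8) (-(1/24)) 0) (pc _) (by fun_prop)
  have P2 := aux_prod A2 (lin (-(11/12)) (17/24) (3/8) (-(5/24)) (1/24)) (pc _) (by fun_prop)
  have P3 := aux_prod A3 (lin (-(1/24)) (5/24) (-(3/8)) (-(17/24)) (11/12)) (pc _) (by fun_prop)
  have P4 := aux_prod A4 (lin 0 (1/24) (-(9/8)) (9/8) (-(1/24))) (pc _) (by fun_prop)
  have S := (((P1.const_mul_left (-(9/8))).add (P2.const_mul_left (1/24))).add
    (P3.const_mul_left (-(1/24)))).add (P4.const_mul_left (9/8))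
  have hQ := fun h : ℝ => aux_alg h (A x) a1 a2 a3 a4 a5 (f x) b1 b2 b3 b4 b5 (p h) (q h)
      (fun _ => rfl) (fun _ => rfl)
  obtain ⟨Q, hQd⟩ : ∃ Q : ℝ → ℂ, Q = fun h : ℝ => auxQ a1 a2 a3 a4 a5 b1 b2 b3 b4 b5 h :=
    ⟨_, rfl⟩
  have Qc : Continuous Q := by rw [hQd]; unfold auxQ; fun_prop
  have hQe : ∀ h : ℝ, auxQ a1 a2 a3 a4 a5 b1 b2 b3 b4 b5 h = Q h := fun h => by rw [hQd]
  simp only [hQe] at hQ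
  have T : (fun h : ℝ => (h : ℂ)^6 * Q h) =O[𝓝 0] fun h : ℝ => h ^ 6 := by
    have o1 : Q =O[𝓝 0] fun _ : ℝ => (1:ℝ) := Qc.continuousAt.tendsto.isBigO_one ℝ
    have o2 : (fun h : ℝ => (h : ℂ)^6) =O[𝓝 0] fun h : ℝ => h ^ 6 :=
      isBigO_of_le _ fun h => by simp
    simpa using o2.mul o1
  have U : (fun h : ℝ => (h:ℂ)^2 * (Lx A f x h - (a1 * b1 + A x * b2))) =O[𝓝 0]
      fun h : ℝ => h ^ 6 := by
    refine (S.add T).congr_left fun h => ?_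
    rcases eq_or_ne h 0 with rfl | h0
    · simp [hp, hq]
    · have hne : (h : ℂ) ≠ 0 := by exact_mod_cast h0
      have e : ∀ X D : ℂ, (h:ℂ)^2 * (1 / (h:ℂ)^2 * X - D) = X - (h:ℂ)^2 * D := fun X D => by
        field_simp
      rw [Lx, e]
      linear_combination -hQ h
  clear_value p q
  obtain ⟨C, hC⟩ := U.bound
  obtain ⟨δ, hδ, hh⟩ := Metric.eventually_nhds_iff.1 hC
  refine ⟨max C 1, δ, by positivity, hδ, fun h h0 h1 => ?_⟩
  have hm := hh (y := h) (by simpa [abs_of_pos h0] using h1)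
  rw [norm_mul, norm_pow, norm_pow, Complex.norm_real, Real.norm_of_nonneg h0.le] at hm
  have h2 : 0 < h ^ 2 := by positivity
  refine le_trans (le_of_mul_le_mul_left (?_ : _ ≤ h ^ 2 * (C * h ^ 4)) h2) ?_
  · calc _ ≤ _ := hm
      _ = _ := by ring
  · gcongr
    exact le_max_left _ _

end
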